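/- arXiv:1807.11837 — 2 statements merged into one kernel-verified Lean document; each statement's English description precedes it below -/
import Mathlib

section
/- For each fixed s with a+2 ≤ s ≤ b, the left-focal Green's function is strictly decreasing in its first argument: G_l(t, s) < G_l(t−1, s) for every t with a+2 ≤ t ≤ b. -/
/-- Rising factorial `rf x r = Γ(x+r)/Γ(x)`, with the convention `rf 0 r = 0`. -/
noncomputable def rf (x r : ℝ) : ℝ := if x = 0 then 0 else Real.Gamma (x + r) / Real.Gamma x

/-- The left-focal Green's function. -/
noncomputable def Gl (a b : ℤ) (α : ℝ) (t s : ℤ) : ℝ :=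
  if t ≤ s - 1 then
    (1 / Real.Gamma α) *
      (rf (b - s + 1 : ℝ) (α - 1) * rf (t - a : ℝ) (α - 2) / rf (b - a : ℝ) (α - 2))
  else
    (1 / Real.Gamma α) *
      (rf (b - s + 1 : ℝ) (α - 1) * rf (t - a : ℝ) (α - 2) / rf (b - a : ℝ) (α - 2) -
        rf (t - s + 1 : ℝ) (α - 1))

/-!
Everything follows from the nabla power rule `rf (x + 1) r - rf x r = r * rf (x + 1) (r - 1)`.
For `r = α - 2 < 0` it shows that `rf (t - a) (α - 2)` decreases in `t`, and for `r = α - 1 > 0`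
that the subtracted term `rf (t - s + 1) (α - 1)` increases. The convention `rf 0 r = 0` makes both
formulas for the Green's function agree at `t = s - 1`, so a step from `t - 1` to `t` never has to
mix the two.
-/

theorem rf_eq_Gamma_div_Gamma (x r : ℝ) : rf x r = Real.Gamma (x + r) / Real.Gamma x := by
  rcases eq_or_ne x 0 with rfl | hx
  · -- Both sides vanish, since `Real.Gamma 0 = 0` and division by zero gives zero.
    simp [rf]
  · exact if_neg hx

theorem rf_zero_left (r : ℝ) : rf 0 r = 0 := if_pos rfl

theorem rf_pos {x r : ℝ} (hx : 0 < x) (hxr : 0 < x + r) : 0 < rf x r := by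
  rw [rf_eq_Gamma_div_Gamma]
  exact div_pos (Real.Gamma_pos_of_pos hxr) (Real.Gamma_pos_of_pos hx)

theorem inv_Gamma_eq_self_mul_inv_Gamma_add_one (x : ℝ) :
    (Real.Gamma x)⁻¹ = x * (Real.Gamma (x + 1))⁻¹ := by
  rcases eq_or_ne x 0 with rfl | hx
  · simp
  · rw [Real.Gamma_add_one hx, mul_inv, mul_inv_cancel_left₀ hx]

theorem rf_add_one_sub_rf {x r : ℝ} (hxr : x + r ≠ 0) :
    rf (x + 1) r - rf x r = r * rf (x + 1) (r - 1) := by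
  have hnum : Real.Gamma (x + 1 + r) = (x + r) * Real.Gamma (x + r) := by
    rw [add_right_comm, Real.Gamma_add_one hxr]
  have hshift : x + 1 + (r - 1) = x + r := by ring
  simp only [rf_eq_Gamma_div_Gamma, div_eq_mul_inv, hnum, hshift,
    inv_Gamma_eq_self_mul_inv_Gamma_add_one x]
  ring

theorem rf_lt_rf_add_one {x r : ℝ} (hx : 0 < x + 1) (hxr : 0 < x + r) (hr : 0 < r) :
    rf x r < rf (x + 1) r := by
  rw [← sub_pos, rf_add_one_sub_rf hxr.ne']
  exact mul_pos hr (rf_pos hx (by linarith))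

theorem rf_add_one_lt_rf {x r : ℝ} (hxr : 0 < x + r) (hr : r < 0) :
    rf (x + 1) r < rf x r := by
  rw [← sub_neg, rf_add_one_sub_rf hxr.ne']
  exact mul_neg_of_neg_of_pos hr (rf_pos (by linarith) (by linarith))

theorem Gl_of_lt {a b t s : ℤ} {α : ℝ} (hts : t < s) :
    Gl a b α t s = (1 / Real.Gamma α) *
      (rf (b - s + 1) (α - 1) * rf (t - a) (α - 2) / rf (b - a) (α - 2)) :=
  if_pos (Int.le_sub_one_of_lt hts)

theorem Gl_of_sub_one_le {a b t s : ℤ} {α : ℝ} (hst : s - 1 ≤ t) :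
    Gl a b α t s = (1 / Real.Gamma α) *
      (rf (b - s + 1) (α - 1) * rf (t - a) (α - 2) / rf (b - a) (α - 2) -
        rf (t - s + 1) (α - 1)) := by
  rcases hst.eq_or_lt with rfl | hlt
  · have hzero : ((s - 1 : ℤ) - s + 1 : ℝ) = 0 := by push_cast; ring
    rw [Gl_of_lt (sub_one_lt s), hzero, rf_zero_left, sub_zero]
  · exact if_neg hlt.not_ge

theorem left_focal_green_decreasing (a b : ℤ) (hab : 2 ≤ b - a) (α : ℝ)
    (hα1 : 1 < α) (hα2 : α < 2) :
    ∀ s : ℤ, a + 2 ≤ s → s ≤ b →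
      ∀ t : ℤ, a + 2 ≤ t → t ≤ b → Gl a b α t s < Gl a b α (t - 1) s := by
  intro s _ hsb t hat _
  have hab' : (2 : ℝ) ≤ b - a := mod_cast hab
  have hsb' : (s : ℝ) ≤ b := mod_cast hsb
  have hat' : (a + 2 : ℝ) ≤ t := mod_cast hat
  have hbs : 0 < rf (b - s + 1) (α - 1) := rf_pos (by linarith) (by linarith)
  have hba : 0 < rf (b - a) (α - 2) := rf_pos (by linarith) (by linarith)
  have hdecr : rf (t - a) (α - 2) < rf ((t - 1 : ℤ) - a) (α - 2) := by
    convert rf_add_one_lt_rf (x := (t - 1 : ℤ) - a) (r := α - 2) _ _ using 2 <;>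
      push_cast <;> linarith
  rcases lt_or_ge t s with hts | hst
  · rw [Gl_of_lt hts, Gl_of_lt (by lia)]
    gcongr
  · have hst' : (s : ℝ) ≤ t := mod_cast hst
    have hincr : rf ((t - 1 : ℤ) - s + 1) (α - 1) < rf (t - s + 1) (α - 1) := by
      convert rf_lt_rf_add_one (x := (t - s : ℝ)) (r := α - 1) _ _ _ using 2 <;>
        push_cast <;> linarith
    rw [Gl_of_sub_one_le (by lia), Gl_of_sub_one_le (by lia)]
    gcongr
end

section
/- For every t with a+1 ≤ t ≤ b, the row sum of the right-focal Green's function satisfies ∑_{s=a+2}^{b} G_r(t, s) ≤ (b − a − 1) · rf(b−a−1, α−1)/Γ(α). -/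
/-- The right-focal Green's function. -/
noncomputable def Gr (a : ℤ) (α : ℝ) (t s : ℤ) : ℝ :=
  if t ≤ s - 1 then
    (1 / Real.Gamma α) * rf (t - a - 1 : ℝ) (α - 1)
  else
    (1 / Real.Gamma α) * (rf (t - a - 1 : ℝ) (α - 1) - rf (t - s + 1 : ℝ) (α - 1))

/-!
Each entry of row `t` is at most `rf (t - a - 1) (α - 1) / Γ(α)`, because the term subtracted for
`s ≤ t` is nonnegative. Log-convexity of `Γ` makes `x ↦ Γ(x + r) / Γ(x)` increasing, so this is in
turn at most `rf (b - a - 1) (α - 1) / Γ(α)`, and the row has `b - a - 1` entries.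
-/

theorem increment_le_increment_of_convexOn {𝕜 : Type*} [Field 𝕜] [LinearOrder 𝕜]
    [IsStrictOrderedRing 𝕜] {f : 𝕜 → 𝕜} {s : Set 𝕜} (hf : ConvexOn 𝕜 s f) {x y r : 𝕜}
    (hx : x ∈ s) (hyr : y + r ∈ s) (hxy : x ≤ y) (hr : 0 ≤ r) :
    f (x + r) - f x ≤ f (y + r) - f y := by
  rcases hr.eq_or_lt with rfl | hr
  · simp
  have hlength : 0 < y - x + r := by linarith
  -- `x + r` and `y` lie symmetrically in `[x, y + r]`, with weights `θ` and `1 - θ` exchanged.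
  set θ := r / (y - x + r)
  have hθr : θ * (y - x + r) = r := div_mul_cancel₀ _ hlength.ne'
  have hθ : 0 ≤ θ := by positivity
  have hθ' : 0 ≤ 1 - θ := sub_nonneg.2 ((div_le_one hlength).2 (by linarith))
  have hfxr : f (x + r) ≤ (1 - θ) * f x + θ * f (y + r) := by
    have hxr : (1 - θ) * x + θ * (y + r) = x + r := by linear_combination hθr
    simpa only [smul_eq_mul, hxr] using hf.2 hx hyr hθ' hθ (sub_add_cancel 1 θ)
  have hfy : f y ≤ θ * f x + (1 - θ) * f (y + r) := by
    have hy : θ * x + (1 - θ) * (y + r) = y := by linear_combination -hθr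
    simpa only [smul_eq_mul, hy] using hf.2 hx hyr hθ hθ' (add_sub_cancel θ 1)
  linarith

theorem monotoneOn_Gamma_add_div_Gamma {r : ℝ} (hr : 0 ≤ r) :
    MonotoneOn (fun x => Real.Gamma (x + r) / Real.Gamma x) (Set.Ioi 0) := by
  intro x (hx : 0 < x) y (hy : 0 < y) hxy
  have hyr : 0 < y + r := by linarith
  have hΓx := Real.Gamma_pos_of_pos hx
  have hΓy := Real.Gamma_pos_of_pos hy
  have hΓxr : 0 < Real.Gamma (x + r) := Real.Gamma_pos_of_pos (by linarith)
  have hΓyr := Real.Gamma_pos_of_pos hyr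
  rw [← Real.log_le_log_iff (div_pos hΓxr hΓx) (div_pos hΓyr hΓy),
    Real.log_div hΓxr.ne' hΓx.ne', Real.log_div hΓyr.ne' hΓy.ne']
  exact increment_le_increment_of_convexOn Real.convexOn_log_Gamma hx hyr hxy hr

theorem rf_nonneg {x r : ℝ} (hx : 0 ≤ x) (hxr : 0 ≤ x + r) : 0 ≤ rf x r := by
  unfold rf
  split_ifs
  · exact le_rfl
  · exact div_nonneg (Real.Gamma_nonneg_of_nonneg hxr) (Real.Gamma_nonneg_of_nonneg hx)

theorem monotoneOn_rf {r : ℝ} (hr : 0 ≤ r) : MonotoneOn (rf · r) (Set.Ici 0) := by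
  intro x (hx : 0 ≤ x) y (hy : 0 ≤ y) hxy
  rcases hx.eq_or_lt with rfl | hx
  · simpa [rf] using rf_nonneg hy (add_nonneg hy hr)
  · have hy : 0 < y := hx.trans_le hxy
    simpa only [rf, hx.ne', hy.ne', if_false] using
      monotoneOn_Gamma_add_div_Gamma hr hx hy hxy

theorem Gr_le {α : ℝ} (hα : 0 < α) (a t s : ℤ) :
    Gr a α t s ≤ rf (t - a - 1 : ℝ) (α - 1) / Real.Gamma α := by
  have hΓ : 0 ≤ 1 / Real.Gamma α := one_div_nonneg.2 (Real.Gamma_pos_of_pos hα).le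
  rw [← one_div_mul_eq_div, Gr]
  split_ifs with hts
  · exact le_rfl
  · have hst : (s : ℝ) ≤ t := by exact_mod_cast show s ≤ t by omega
    have hrf : 0 ≤ rf (t - s + 1 : ℝ) (α - 1) := rf_nonneg (by linarith) (by linarith)
    exact mul_le_mul_of_nonneg_left (sub_le_self _ hrf) hΓ

theorem sum_Gr_le {α : ℝ} (hα : 0 < α) {a b : ℤ} (hab : a + 1 ≤ b) (t : ℤ) :
    ∑ s ∈ Finset.Icc (a + 2) b, Gr a α t s ≤
      (b - a - 1 : ℝ) * rf (t - a - 1 : ℝ) (α - 1) / Real.Gamma α := by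
  have hcard : ((Finset.Icc (a + 2) b).card : ℝ) = b - a - 1 := by
    have hcardInt : ((Finset.Icc (a + 2) b).card : ℤ) = b - a - 1 := by
      rw [Int.card_Icc_of_le _ _ (by omega)]
      ring
    exact_mod_cast hcardInt
  calc ∑ s ∈ Finset.Icc (a + 2) b, Gr a α t s
      ≤ (Finset.Icc (a + 2) b).card • (rf (t - a - 1 : ℝ) (α - 1) / Real.Gamma α) :=
        Finset.sum_le_card_nsmul _ _ _ fun s _ => Gr_le hα a t s
    _ = (b - a - 1 : ℝ) * rf (t - a - 1 : ℝ) (α - 1) / Real.Gamma α := by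
        rw [nsmul_eq_mul, hcard, mul_div_assoc]

theorem right_focal_green_row_sum_bound_general {a b t : ℤ} {α : ℝ} (hα : 1 ≤ α)
    (hat : a + 1 ≤ t) (htb : t ≤ b) :
    ∑ s ∈ Finset.Icc (a + 2) b, Gr a α t s ≤
      (b - a - 1 : ℝ) * rf (b - a - 1 : ℝ) (α - 1) / Real.Gamma α := by
  have hΓ : 0 ≤ Real.Gamma α := Real.Gamma_nonneg_of_nonneg (by linarith)
  have hat' : (a : ℝ) + 1 ≤ t := by exact_mod_cast hat
  have htb' : (t : ℝ) ≤ b := by exact_mod_cast htb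
  have hrf : rf (t - a - 1 : ℝ) (α - 1) ≤ rf (b - a - 1 : ℝ) (α - 1) :=
    monotoneOn_rf (sub_nonneg.2 hα) (Set.mem_Ici.2 (by linarith)) (Set.mem_Ici.2 (by linarith))
      (by linarith)
  have hlength : (0 : ℝ) ≤ b - a - 1 := by linarith
  calc ∑ s ∈ Finset.Icc (a + 2) b, Gr a α t s
      ≤ (b - a - 1 : ℝ) * rf (t - a - 1 : ℝ) (α - 1) / Real.Gamma α :=
        sum_Gr_le (by linarith) (hat.trans htb) t
    _ ≤ (b - a - 1 : ℝ) * rf (b - a - 1 : ℝ) (α - 1) / Real.Gamma α :=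
        div_le_div_of_nonneg_right (mul_le_mul_of_nonneg_left hrf hlength) hΓ

theorem right_focal_green_row_sum_bound (a b : ℤ) (hab : 2 ≤ b - a) (α : ℝ)
    (hα1 : 1 < α) (hα2 : α < 2) :
    ∀ t : ℤ, a + 1 ≤ t → t ≤ b →
      ∑ s ∈ Finset.Icc (a + 2) b, Gr a α t s ≤
        (b - a - 1 : ℝ) * rf (b - a - 1 : ℝ) (α - 1) / Real.Gamma α :=
  fun _ => right_focal_green_row_sum_bound_general hα1.le
end
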